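/- arXiv:1206.5577 — 7 statements merged into one kernel-verified Lean document; each statement's English description precedes it below -/
import Mathlib

section
/- Let k ≥ 1 and let 0 < n_1 < n_2 < ⋯ < n_k be strictly increasing positive integers. Then ∑_{i=1}^{k} (−1)^{k−i} n_i² ≥ 2 n_k − 1. -/
/-!
Peeling off the last two terms, the alternating sum `S_k = a_k - a_{k-1} + a_{k-2} - ⋯` of a
nonnegative monotone sequence lies between `a_k - a_{k-1}` and `a_k`. For squares of a sequence
with gaps at least one, `n_k² - n_{k-1}² ≥ n_k² - (n_k - 1)² = 2 n_k - 1`.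
-/

section AlternatingSum

variable {R : Type*} [Ring R]

theorem alternating_sum_Icc_succ (f : ℕ → R) (k : ℕ) :
    ∑ i ∈ Finset.Icc 1 (k + 1), (-1 : R) ^ (k + 1 - i) * f i =
      f (k + 1) - ∑ i ∈ Finset.Icc 1 k, (-1 : R) ^ (k - i) * f i := by
  have sign_flip : ∀ i ∈ Finset.Icc 1 k,
      (-1 : R) ^ (k + 1 - i) * f i = -((-1 : R) ^ (k - i) * f i) := fun i hi ↦ by
    rw [Nat.succ_sub (Finset.mem_Icc.mp hi).2, pow_succ', neg_one_mul, neg_mul]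
  rw [Finset.sum_Icc_succ_top (Nat.le_add_left 1 k), Finset.sum_congr rfl sign_flip,
    Finset.sum_neg_distrib, Nat.sub_self, pow_zero, one_mul, neg_add_eq_sub]

variable [PartialOrder R] [IsOrderedAddMonoid R] {f : ℕ → R} {k : ℕ}

theorem alternating_sum_mem_Icc_of_monotoneOn (hk : 1 ≤ k) (hf₁ : 0 ≤ f 1)
    (hf : MonotoneOn f (Set.Icc 1 k)) :
    ∑ i ∈ Finset.Icc 1 k, (-1 : R) ^ (k - i) * f i ∈ Set.Icc 0 (f k) := by
  induction k, hk using Nat.le_induction with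
  | base => simpa using hf₁
  | succ k hk ih =>
    obtain ⟨sum_nonneg, sum_le⟩ := ih (hf.mono (Set.Icc_subset_Icc_right k.le_succ))
    have f_le : f k ≤ f (k + 1) := hf ⟨hk, k.le_succ⟩ ⟨by lia, le_rfl⟩ k.le_succ
    rw [alternating_sum_Icc_succ]
    exact ⟨sub_nonneg.mpr (sum_le.trans f_le), sub_le_self _ sum_nonneg⟩

theorem sub_le_alternating_sum_of_monotoneOn (hk : 1 ≤ k) (hf₁ : 0 ≤ f 1)
    (hf : MonotoneOn f (Set.Icc 1 k)) :
    f (k + 1) - f k ≤ ∑ i ∈ Finset.Icc 1 (k + 1), (-1 : R) ^ (k + 1 - i) * f i := by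
  rw [alternating_sum_Icc_succ]
  exact sub_le_sub_left (alternating_sum_mem_Icc_of_monotoneOn hk hf₁ hf).2 _

end AlternatingSum

section Squares

variable {R : Type*} [CommRing R]

theorem two_mul_sub_one_le_sq_sub_sq [PartialOrder R] [IsOrderedRing R] {a b : R}
    (hb : 0 ≤ b) (hab : b + 1 ≤ a) : 2 * a - 1 ≤ a ^ 2 - b ^ 2 :=
  calc
    2 * a - 1 = a ^ 2 - (a - 1) ^ 2 := by ring
    _ ≤ a ^ 2 - b ^ 2 :=
      sub_le_sub_left (pow_le_pow_left₀ hb (le_sub_iff_add_le.mpr hab) 2) _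

theorem alternating_sum_sq_ge_general [LinearOrder R] [IsOrderedRing R] {n : ℕ → R} {k : ℕ}
    (hk : 1 ≤ k) (hn₁ : 0 ≤ n 1) (hgap : ∀ i, 1 ≤ i → i < k → n i + 1 ≤ n (i + 1)) :
    2 * n k - 1 ≤ ∑ i ∈ Finset.Icc 1 k, (-1 : R) ^ (k - i) * n i ^ 2 := by
  have n_mono : MonotoneOn n (Set.Icc 1 k) :=
    monotoneOn_of_le_add_one Set.ordConnected_Icc fun i _ hi hi' ↦
      (le_add_of_nonneg_right zero_le_one).trans (hgap i hi.1 hi'.2)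
  have n_nonneg : ∀ i ∈ Set.Icc 1 k, 0 ≤ n i := fun i hi ↦
    hn₁.trans (n_mono ⟨le_rfl, hk⟩ hi hi.1)
  have sq_mono : MonotoneOn (fun i ↦ n i ^ 2) (Set.Icc 1 k) := fun i hi j hj hij ↦
    pow_le_pow_left₀ (n_nonneg i hi) (n_mono hi hj hij) 2
  obtain ⟨m, rfl⟩ := Nat.exists_eq_add_of_le' hk
  obtain rfl | hm := m.eq_zero_or_pos
  · have base : 2 * n 1 - 1 ≤ n 1 ^ 2 :=
      calc
        2 * n 1 - 1 = n 1 ^ 2 - (n 1 - 1) ^ 2 := by ring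
        _ ≤ n 1 ^ 2 := sub_le_self _ (sq_nonneg _)
    simpa using base
  · calc
      2 * n (m + 1) - 1 ≤ n (m + 1) ^ 2 - n m ^ 2 :=
        two_mul_sub_one_le_sq_sub_sq (n_nonneg m ⟨hm, m.le_succ⟩) (hgap m hm m.lt_succ_self)
      _ ≤ _ := sub_le_alternating_sum_of_monotoneOn hm (sq_nonneg (n 1))
        (sq_mono.mono (Set.Icc_subset_Icc_right m.le_succ))

end Squares

/-- If `0 < n 1 < n 2 < ⋯ < n k` (`k ≥ 1`) are strictly increasing positive integers,
then `∑_{i=1}^{k} (−1)^{k−i} (n i)² ≥ 2 (n k) − 1`. -/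
theorem alternating_sum_sq_ge (k : ℕ) (hk : 1 ≤ k) (n : ℕ → ℤ)
    (hpos : 0 < n 1)
    (hmono : ∀ i, 1 ≤ i → i < k → n i < n (i + 1)) :
    2 * n k - 1 ≤ ∑ i ∈ Finset.Icc 1 k, (-1 : ℤ) ^ (k - i) * (n i) ^ 2 :=
  alternating_sum_sq_ge_general hk hpos.le hmono
end

section
/- Let q, r, s, w be integers with q ≥ 1, r ≥ 2, s ≥ 1, w ≥ 2, let ε ∈ {1, −1}, and let p be an integer satisfying p·(q r w² − 1) = s q² r² w² − ε s. Then, as rational numbers, p ≤ s q r + (3/7)·s. -/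
/-!
Put `x = q r` and `v = w²`. Dividing the relation by `x v - 1 > 0` gives
`p = s x + s (x - ε) / (x v - 1)`. The correction is at most `s (x + 1) / (x v - 1)`, and
`(x + 1) / (x v - 1)` decreases in both variables, so on `x ≥ 2`, `v ≥ 4` it is largest at the
corner `(2, 4)`, where it equals `3 / 7`.
-/

theorem eq_mul_add_mul_div_of_mul_eq {K : Type*} [Field K] {p s x v ε : K} (hxv : x * v - 1 ≠ 0)
    (hp : p * (x * v - 1) = s * x ^ 2 * v - ε * s) :
    p = s * x + s * ((x - ε) / (x * v - 1)) := by
  have hmul : p * (x * v - 1) = s * x * (x * v - 1) + s * (x - ε) := by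
    linear_combination hp
  rw [eq_div_of_mul_eq hxv hmul, add_div, mul_div_cancel_right₀ _ hxv, mul_div_assoc]

section OrderedField

variable {K : Type*} [Field K] [LinearOrder K] [IsStrictOrderedRing K]

theorem add_one_div_mul_sub_one_le {a b x v : K} (ha : 0 ≤ a) (hab : 1 < a * b) (hax : a ≤ x)
    (hbv : b ≤ v) : (x + 1) / (x * v - 1) ≤ (a + 1) / (a * b - 1) := by
  have hb : 0 < b := pos_of_mul_pos_right (zero_lt_one.trans hab) ha
  have hx : 0 ≤ x := ha.trans hax
  have hxb : 1 < x * b := hab.trans_le (by gcongr)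
  calc (x + 1) / (x * v - 1) ≤ (x + 1) / (x * b - 1) := by
        have : 0 < x * b - 1 := sub_pos.2 hxb
        gcongr
    _ ≤ (a + 1) / (a * b - 1) := by
        rw [div_le_div_iff₀ (sub_pos.2 hxb) (sub_pos.2 hab)]
        have hgap : 0 ≤ (x - a) * (b + 1) := mul_nonneg (sub_nonneg.2 hax) (by linarith)
        linear_combination hgap

theorem satellite_slope_bound_general {q r s w p ε : K} (hqr : 2 ≤ q * r) (hs : 0 ≤ s)
    (hw : 2 ≤ |w|) (hε : -1 ≤ ε)
    (hp : p * (q * r * w ^ 2 - 1) = s * q ^ 2 * r ^ 2 * w ^ 2 - ε * s) :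
    p ≤ s * q * r + 3 / 7 * s := by
  have hw4 : 4 ≤ w ^ 2 := by
    rw [← sq_abs]
    linear_combination pow_le_pow_left₀ zero_le_two hw 2
  have hden : 0 < q * r * w ^ 2 - 1 := by
    linarith [mul_le_mul hqr hw4 zero_le_four (zero_le_two.trans hqr)]
  calc p = s * (q * r) + s * ((q * r - ε) / (q * r * w ^ 2 - 1)) :=
        eq_mul_add_mul_div_of_mul_eq hden.ne' (by linear_combination hp)
    _ ≤ s * (q * r) + s * ((q * r + 1) / (q * r * w ^ 2 - 1)) := by
        gcongr
        linarith
    _ ≤ s * (q * r) + s * ((2 + 1) / (2 * 4 - 1)) := by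
        gcongr s * (q * r) + s * ?_
        exact add_one_div_mul_sub_one_le zero_le_two (by norm_num) hqr hw4
    _ = s * q * r + 3 / 7 * s := by ring

end OrderedField

/-- If `q ≥ 1`, `r ≥ 2`, `s ≥ 1`, `w ≥ 2` are integers, `ε = ±1`, and
`p·(q r w² − 1) = s q² r² w² − ε s`, then `p ≤ s q r + (3/7) s` as rational numbers. -/
theorem satellite_slope_bound (q r s w p ε : ℤ) (hq : 1 ≤ q) (hr : 2 ≤ r) (hs : 1 ≤ s)
    (hw : 2 ≤ w) (hε : ε = 1 ∨ ε = -1)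
    (hp : p * (q * r * w ^ 2 - 1) = s * q ^ 2 * r ^ 2 * w ^ 2 - ε * s) :
    (p : ℚ) ≤ (s : ℚ) * q * r + (3 / 7) * s := by
  have hqr : 2 ≤ q * r := hr.trans (le_mul_of_one_le_left (by lia) hq)
  have hε' : -1 ≤ ε := by lia
  exact satellite_slope_bound_general (K := ℚ) (w := w) (ε := ε) (mod_cast hqr)
    (mod_cast zero_le_one.trans hs) (mod_cast hw.trans (le_abs_self w)) (mod_cast hε')
    (mod_cast hp)
end

section
/- Let p, q be positive integers with q ≥ 2 and p > 2q. Let N_q = { x ∈ ZMod p : the canonical representative of x in {0,…,p−1} is < q }. Suppose φ : ZMod p → ZMod p is given by φ(x) = a·x + b, where a is a unit of ZMod p and b ∈ ZMod p, and suppose φ maps N_q bijectively onto N_q. Then either φ(x) = x for all x, or φ(x) = (q − 1) − x for all x. -/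
/-!
For `N = {x : ZMod p | x.val < q}`, the only point of `N` that the translation `x ↦ x + 1` moves
out of `N` is the right endpoint `q - 1`. An affine map `φ x = a * x + b` carries the translation
by `1` to the translation by `a`, so if `φ` maps `N` onto itself, then the translation by `a` moves
at most one point out of `N`, namely `φ (q - 1)`. When `N` and its complement both have at least
two elements, this forces `a = ±1`, and locating the point that leaves `N` then determines `b`.
-/

/-- The points of `A` that leave `A` under one application of `t`. -/
def exitSet {α : Type*} (t : α → α) (A : Set α) : Set α := {x ∈ A | t x ∉ A}

theorem surjOn_exitSet_of_semiconj {α β : Type*} {φ : α → β} {s : α → α} {t : β → β}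
    {A : Set α} {B : Set β} (hφ : Function.Semiconj φ s t) (hmaps : Set.MapsTo φ A B)
    (hsurj : Set.SurjOn φ A B) : Set.SurjOn φ (exitSet s A) (exitSet t B) := by
  rintro y ⟨hy, hty⟩
  obtain ⟨x, hx, rfl⟩ := hsurj hy
  exact ⟨x, ⟨hx, fun hsx => hty (hφ x ▸ hmaps hsx)⟩, rfl⟩

theorem mapsTo_of_surjOn_of_ncard_le {α β : Type*} {f : α → β} {A : Set α} {B : Set β}
    (hA : A.Finite) (hcard : A.ncard ≤ B.ncard) (hf : Set.SurjOn f A B) : Set.MapsTo f A B := by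
  have himage : B = f '' A :=
    Set.eq_of_subset_of_ncard_le hf ((Set.ncard_image_le hA).trans hcard) (hA.image f)
  exact Set.mapsTo_iff_image_subset.2 himage.ge

theorem natCast_mem_exitSet_add_natCast {p q n d : ℕ} (hn : n < q) (hq : q ≤ n + d)
    (hp : n + d < p) :
    (n : ZMod p) ∈ exitSet (· + (d : ZMod p)) {x : ZMod p | x.val < q} := by
  constructor
  · change (n : ZMod p).val < q
    rwa [ZMod.val_cast_of_lt (by omega)]
  · change ¬ ((n : ZMod p) + (d : ZMod p)).val < q
    rwa [← Nat.cast_add, ZMod.val_cast_of_lt hp, not_lt]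

theorem exitSet_add_one_eq_singleton {p q : ℕ} (hq : 0 < q) (hp : q < p) :
    exitSet (· + 1) {x : ZMod p | x.val < q} = {(q : ZMod p) - 1} := by
  have : NeZero p := ⟨by omega⟩
  refine Set.Subset.antisymm ?_ (Set.singleton_subset_iff.2 ?_)
  · rintro x ⟨hx : x.val < q, hx_succ : ¬ (x + 1).val < q⟩
    have hval_succ : (x + 1).val ≤ x.val + 1 := by
      grw [ZMod.val_add_le, ZMod.val_one_eq_one_mod, Nat.mod_le]
    have hlast : q = x.val + 1 := by omega
    simp [hlast]
  · have hlast := natCast_mem_exitSet_add_natCast (p := p) (q := q) (n := q - 1) (d := 1)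
      (by omega) (by omega) (by omega)
    rwa [Nat.cast_pred hq, Nat.cast_one] at hlast

theorem zero_mem_exitSet_add_neg_one {p q : ℕ} (hq : 0 < q) (hp : q < p) :
    (0 : ZMod p) ∈ exitSet (· + -1) {x : ZMod p | x.val < q} := by
  have hzero := natCast_mem_exitSet_add_natCast (p := p) (q := q) (n := 0) (d := p - 1)
    (by omega) (by omega) (by omega)
  rwa [Nat.cast_pred (by omega), ZMod.natCast_self, zero_sub, Nat.cast_zero] at hzero

theorem eq_one_or_eq_neg_one_of_subsingleton_exitSet {p q : ℕ} (hq : 2 ≤ q) (hp : q + 2 ≤ p)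
    {a : ZMod p} (ha : a ≠ 0)
    (hexit : (exitSet (· + a) {x : ZMod p | x.val < q}).Subsingleton) : a = 1 ∨ a = -1 := by
  have : NeZero p := ⟨by omega⟩
  have : Fact (1 < p) := ⟨by omega⟩
  obtain ⟨d, hd, rfl⟩ : ∃ d < p, (d : ZMod p) = a := ⟨a.val, a.val_lt, a.natCast_zmod_val⟩
  have hd_ne_zero : d ≠ 0 := by
    rintro rfl
    exact ha Nat.cast_zero
  by_contra! hne
  have hd_ne_one : d ≠ 1 := by
    rintro rfl
    exact hne.1 Nat.cast_one
  have hd_succ_ne : d + 1 ≠ p := by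
    intro hdp
    refine hne.2 (eq_neg_of_add_eq_zero_left ?_)
    rw [← Nat.cast_succ, Nat.succ_eq_add_one, hdp, ZMod.natCast_self]
  -- The exit points are the `n` with `q - d ≤ n < min q (p - d)`; the first two are distinct.
  have hfirst : ((q - d : ℕ) : ZMod p) ∈ exitSet (· + (d : ZMod p)) {x | x.val < q} :=
    natCast_mem_exitSet_add_natCast (by omega) (by omega) (by omega)
  have hsecond : ((q - d + 1 : ℕ) : ZMod p) ∈ exitSet (· + (d : ZMod p)) {x | x.val < q} :=
    natCast_mem_exitSet_add_natCast (by omega) (by omega) (by omega)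
  simpa using hexit hfirst hsecond

theorem ne_zero_of_surjOn_affine {R : Type*} [NonUnitalNonAssocSemiring R] {a b : R} {A B : Set R}
    (hB : B.Nontrivial) (hsurj : Set.SurjOn (fun x => a * x + b) A B) : a ≠ 0 := by
  rintro rfl
  obtain ⟨y, hy, hyb⟩ := hB.exists_ne b
  obtain ⟨x, -, hxy⟩ := hsurj hy
  exact hyb (by simpa using hxy.symm)

theorem exitSet_add_subset_singleton_of_surjOn_affine {p q : ℕ} (hq : 0 < q) (hp : q < p)
    {a b : ZMod p}
    (hsurj : Set.SurjOn (fun x => a * x + b) {x : ZMod p | x.val < q} {x : ZMod p | x.val < q}) :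
    exitSet (· + a) {x : ZMod p | x.val < q} ⊆ {a * (q - 1) + b} := by
  have : NeZero p := ⟨by omega⟩
  have hsemiconj : Function.Semiconj (fun x => a * x + b) (· + 1) (· + a) := fun x => by ring
  have hmaps := mapsTo_of_surjOn_of_ncard_le (Set.toFinite _) le_rfl hsurj
  have hexit := surjOn_exitSet_of_semiconj hsemiconj hmaps hsurj
  rwa [exitSet_add_one_eq_singleton hq hp, Set.SurjOn, Set.image_singleton] at hexit

theorem affine_fixing_interval_general {p q : ℕ} (hq : 2 ≤ q) (hp : q + 2 ≤ p)
    {φ : ZMod p → ZMod p} {a b : ZMod p} (hφ : ∀ x, φ x = a * x + b)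
    (hsurj : Set.SurjOn φ {x : ZMod p | x.val < q} {x : ZMod p | x.val < q}) :
    (∀ x, φ x = x) ∨ (∀ x, φ x = ((q : ZMod p) - 1) - x) := by
  have : Fact (1 < p) := ⟨by omega⟩
  have hq_pos : 0 < q := by omega
  have hqp : q < p := by omega
  obtain rfl : φ = fun x => a * x + b := funext hφ
  have hnontrivial : {x : ZMod p | x.val < q}.Nontrivial :=
    ⟨0, by simpa using hq_pos, 1, by simpa [ZMod.val_one] using Nat.lt_of_succ_le hq, zero_ne_one⟩
  have ha : a ≠ 0 := ne_zero_of_surjOn_affine hnontrivial hsurj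
  have hexit := exitSet_add_subset_singleton_of_surjOn_affine hq_pos hqp hsurj
  rcases eq_one_or_eq_neg_one_of_subsingleton_exitSet hq hp ha
    (Set.subsingleton_singleton.anti hexit) with rfl | rfl
  · left
    have hlast : (q : ZMod p) - 1 = 1 * (q - 1) + b :=
      hexit ((exitSet_add_one_eq_singleton hq_pos hqp).ge rfl)
    intro x
    linear_combination -hlast
  · right
    have hzero : (0 : ZMod p) = -1 * (q - 1) + b :=
      hexit (zero_mem_exitSet_add_neg_one hq_pos hqp)
    intro x
    linear_combination -hzero

/-- Let `q ≥ 2`, `p > 2q`, and `N_q = {x : ZMod p | x.val < q}`. If the affine bijection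
`φ(x) = a·x + b` (with `a` a unit) maps `N_q` bijectively onto `N_q`, then `φ` is the
identity or `φ(x) = (q − 1) − x`. -/
theorem affine_fixing_interval (p q : ℕ) (hq : 2 ≤ q) (hp : 2 * q < p)
    (φ : ZMod p → ZMod p) (a : (ZMod p)ˣ) (b : ZMod p)
    (hφ : ∀ x, φ x = (a : ZMod p) * x + b)
    (hbij : Set.BijOn φ {x : ZMod p | x.val < q} {x : ZMod p | x.val < q}) :
    (∀ x, φ x = x) ∨ (∀ x, φ x = ((q : ZMod p) - 1) - x) :=
  affine_fixing_interval_general hq (by omega) hφ hbij.surjOn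
end

section
/- Let p, q be positive integers with q ≥ 3 and p > 6q. In ZMod p, let N_q = { x : the canonical representative of x in {0,…,p−1} is < q }, N_q^+ = { x : the representative lies in {q,…,2q−1} }, and N_q^− = { x : the representative lies in {p−q,…,p−1} }. Suppose φ : ZMod p → ZMod p is given by φ(x) = a·x + b, where a is a unit of ZMod p and b ∈ ZMod p, and suppose φ(N_q) ⊆ N_q^− ∪ N_q^+. Then either φ(N_q) = N_q^− or φ(N_q) = N_q^+. -/
/-!
Lift the values `φ 0, …, φ (q - 1)` to integers in `[-q, 0) ∪ [q, 2q)`. Second differences of the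
lifts vanish modulo `p` and are smaller than `p` in absolute value, so they vanish: the lifts form
an arithmetic progression in `ℤ`. Three terms of the progression already force its step to be
shorter than `q`, so the progression cannot jump over the gap `[0, q)` and stays in one of the two
blocks. Its step is nonzero because `a ≠ 0`, so its `q` terms are distinct and fill that block of
`q` integers.
-/

open Set

theorem eq_add_mul_of_dvd_second_difference {p l d : ℤ} {n : ℕ} {f : ℕ → ℤ} (hd : 2 * d < p)
    (hf : ∀ i < n, f i ∈ Icc l (l + d))
    (hdvd : ∀ i, i + 2 < n → p ∣ f i + f (i + 2) - 2 * f (i + 1)) :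
    ∀ i < n, f i = f 0 + i * (f 1 - f 0) := by
  have second_difference : ∀ i, i + 2 < n → f i + f (i + 2) - 2 * f (i + 1) = 0 := by
    intro i hi
    obtain ⟨hl₀, hu₀⟩ := hf i (by lia)
    obtain ⟨hl₁, hu₁⟩ := hf (i + 1) (by lia)
    obtain ⟨hl₂, hu₂⟩ := hf (i + 2) hi
    exact Int.eq_zero_of_abs_lt_dvd (hdvd i hi) (abs_lt.2 ⟨by lia, by lia⟩)
  intro i
  induction i using Nat.twoStepInduction with
  | zero => simp
  | one => simp
  | more i ih₀ ih₁ =>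
    intro hi
    have h₀ := ih₀ (by lia)
    have h₁ := ih₁ (by lia)
    push_cast at h₁ ⊢
    linear_combination second_difference i hi - h₀ + 2 * h₁

theorem abs_step_lt_of_three_terms_mem {q x r : ℤ} (h₀ : x ∈ Ico (-q) 0 ∪ Ico q (2 * q))
    (h₁ : x + r ∈ Ico (-q) 0 ∪ Ico q (2 * q)) (h₂ : x + 2 * r ∈ Ico (-q) 0 ∪ Ico q (2 * q)) :
    |r| < q := by
  -- Steps of length at least `q` in one direction never revisit a block, and there are only two.
  simp only [mem_union, mem_Ico] at h₀ h₁ h₂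
  rw [abs_lt]
  lia

theorem forall_lt_or_forall_le_of_abs_sub_le {a b : ℤ} {n : ℕ} {f : ℕ → ℤ}
    (hgap : ∀ i < n, f i < a ∨ b ≤ f i) (hstep : ∀ i, i + 1 < n → |f (i + 1) - f i| ≤ b - a) :
    (∀ i < n, f i < a) ∨ ∀ i < n, b ≤ f i := by
  have same_side : ∀ i < n, (f i < a ↔ f 0 < a) := by
    intro i
    induction i with
    | zero => simp
    | succ i ih =>
      intro hi
      have hprev := ih (by lia)
      have hjump := abs_le.1 (hstep i hi)
      have hi₀ := hgap i (by lia)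
      have hi₁ := hgap (i + 1) hi
      lia
  by_cases h : f 0 < a
  · exact .inl fun i hi => (same_side i hi).2 h
  · exact .inr fun i hi => (hgap i hi).resolve_left fun hlt => h ((same_side i hi).1 hlt)

theorem image_Iio_eq_Ico_of_injOn {n : ℕ} {c : ℤ} {f : ℕ → ℤ} (hinj : InjOn f (Iio n))
    (hmaps : MapsTo f (Iio n) (Ico c (c + n))) : f '' Iio n = Ico c (c + n) := by
  refine eq_of_subset_of_ncard_le hmaps.image_subset ?_ (finite_Ico _ _)
  rw [hinj.ncard_image, ← Finset.coe_Ico, ← Finset.coe_Iio, ncard_coe_finset, ncard_coe_finset]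
  simp

theorem forall_neg_or_forall_le_of_eq_add_mul {q : ℕ} (hq : 3 ≤ q) {f : ℕ → ℤ} {r : ℤ}
    (hf : ∀ i < q, f i = f 0 + i * r)
    (hmem : ∀ i < q, f i ∈ Ico (-q : ℤ) 0 ∪ Ico (q : ℤ) (2 * q)) :
    (∀ i < q, f i < 0) ∨ ∀ i < q, (q : ℤ) ≤ f i := by
  have hr_lt : |r| < q := by
    refine abs_step_lt_of_three_terms_mem (hmem 0 (by lia)) ?_ ?_
    · have h₁ := hmem 1 (by lia)
      rwa [hf 1 (by lia), Nat.cast_one, one_mul] at h₁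
    · have h₂ := hmem 2 (by lia)
      rwa [hf 2 (by lia), Nat.cast_ofNat] at h₂
  refine forall_lt_or_forall_le_of_abs_sub_le
    (fun i hi => (hmem i hi).imp And.right And.left) fun i hi => ?_
  have hstep : f (i + 1) - f i = r := by
    rw [hf (i + 1) hi, hf i (by lia)]
    push_cast
    ring
  simpa [hstep] using hr_lt.le

theorem image_Iio_eq_Ico_or_of_eq_add_mul {q : ℕ} (hq : 3 ≤ q) {f : ℕ → ℤ} {r : ℤ} (hr : r ≠ 0)
    (hf : ∀ i < q, f i = f 0 + i * r)
    (hmem : ∀ i < q, f i ∈ Ico (-q : ℤ) 0 ∪ Ico (q : ℤ) (2 * q)) :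
    f '' Iio q = Ico (-q : ℤ) 0 ∨ f '' Iio q = Ico (q : ℤ) (2 * q) := by
  have hinj : InjOn f (Iio q) := by
    intro i hi j hj hij
    rw [hf i hi, hf j hj] at hij
    exact_mod_cast mul_right_cancel₀ hr (add_left_cancel hij)
  refine (forall_neg_or_forall_le_of_eq_add_mul hq hf hmem).imp (fun hneg => ?_) fun hpos => ?_
  · have hmaps : MapsTo f (Iio q) (Ico (-q : ℤ) (-q + q)) := fun i hi => by
      have := hneg i hi
      have := hmem i hi
      simp only [mem_union, mem_Ico] at this ⊢
      lia
    simpa using image_Iio_eq_Ico_of_injOn hinj hmaps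
  · have hmaps : MapsTo f (Iio q) (Ico (q : ℤ) (q + q)) := fun i hi => by
      have := hpos i hi
      have := hmem i hi
      simp only [mem_union, mem_Ico] at this ⊢
      lia
    simpa [two_mul] using image_Iio_eq_Ico_of_injOn hinj hmaps

section Residues

theorem eq_add_mul_of_intCast_eq_affine {p n : ℕ} {a b : ZMod p} {l d : ℤ} {f : ℕ → ℤ}
    (hd : 2 * d < p) (hf : ∀ i < n, f i ∈ Icc l (l + d))
    (hcast : ∀ i < n, (f i : ZMod p) = a * i + b) :
    ∀ i < n, f i = f 0 + i * (f 1 - f 0) := by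
  refine eq_add_mul_of_dvd_second_difference hd hf fun i hi => ?_
  rw [← ZMod.intCast_zmod_eq_zero_iff_dvd]
  push_cast
  rw [hcast i (by lia), hcast (i + 1) (by lia), hcast (i + 2) hi]
  push_cast
  ring

variable {p : ℕ} [NeZero p]

theorem image_natCast_Iio {n : ℕ} (hn : n ≤ p) :
    ((↑) : ℕ → ZMod p) '' Iio n = {x | x.val < n} := by
  ext x
  constructor
  · rintro ⟨i, hi, rfl⟩
    exact (ZMod.val_natCast_of_lt (lt_of_lt_of_le hi hn)).trans_lt hi
  · exact fun hx => ⟨x.val, hx, ZMod.natCast_zmod_val x⟩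

theorem image_intCast_Ico {m n : ℕ} (hn : n ≤ p) :
    ((↑) : ℤ → ZMod p) '' Ico (m : ℤ) n = {x | m ≤ x.val ∧ x.val < n} := by
  ext x
  constructor
  · rintro ⟨z, ⟨hmz, hzn⟩, rfl⟩
    have hval : ((z : ZMod p).val : ℤ) = z := by
      rw [ZMod.val_intCast, Int.emod_eq_of_lt (by lia) (by lia)]
    rw [mem_ofPred_eq]
    lia
  · exact fun ⟨hmx, hxn⟩ => ⟨x.val, ⟨mod_cast hmx, mod_cast hxn⟩, by simp⟩

theorem image_intCast_Ico_neg {n : ℕ} (hn : n ≤ p) :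
    ((↑) : ℤ → ZMod p) '' Ico (-n : ℤ) 0 = {x | p - n ≤ x.val} := by
  have shift : (· + (p : ℤ)) '' Ico (-n : ℤ) 0 = Ico ((p - n : ℕ) : ℤ) p := by
    simp [Nat.cast_sub hn, neg_add_eq_sub]
  calc ((↑) : ℤ → ZMod p) '' Ico (-n : ℤ) 0
      = (↑) '' ((· + (p : ℤ)) '' Ico (-n : ℤ) 0) := by
        rw [image_image]
        simp only [Int.cast_add, Int.cast_natCast, CharP.cast_eq_zero, add_zero]
    _ = {x | p - n ≤ x.val ∧ x.val < p} := by rw [shift, image_intCast_Ico le_rfl]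
    _ = {x | p - n ≤ x.val} := by simp [ZMod.val_lt]

end Residues

theorem affine_image_interval_general {p q : ℕ} (hq : 3 ≤ q) (hp : 6 * q < p + 2)
    {φ : ZMod p → ZMod p} {a b : ZMod p} (ha : a ≠ 0) (hφ : ∀ x, φ x = a * x + b)
    (hsub : φ '' {x : ZMod p | x.val < q} ⊆
      {x : ZMod p | p - q ≤ x.val} ∪ {x : ZMod p | q ≤ x.val ∧ x.val < 2 * q}) :
    φ '' {x : ZMod p | x.val < q} = {x : ZMod p | p - q ≤ x.val} ∨
      φ '' {x : ZMod p | x.val < q} = {x : ZMod p | q ≤ x.val ∧ x.val < 2 * q} := by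
  have : NeZero p := ⟨by lia⟩
  have hpos : {x : ZMod p | q ≤ x.val ∧ x.val < 2 * q} = (↑) '' Ico (q : ℤ) (2 * q) := by
    exact_mod_cast (image_intCast_Ico (p := p) (m := q) (n := 2 * q) (by lia)).symm
  rw [← image_natCast_Iio (by lia), ← image_intCast_Ico_neg (by lia), hpos] at hsub ⊢
  have lift : ∀ i < q, ∃ z ∈ Ico (-q : ℤ) 0 ∪ Ico (q : ℤ) (2 * q), (z : ZMod p) = φ i := by
    rw [← image_union, image_image, image_subset_iff] at hsub
    exact fun i hi => hsub hi
  choose! f hmem hcast using lift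
  have hprog : ∀ i < q, f i = f 0 + i * (f 1 - f 0) := by
    refine eq_add_mul_of_intCast_eq_affine (p := p) (l := -q) (d := 3 * q - 1) (by lia)
      (fun i hi => ?_) fun i hi => (hcast i hi).trans (hφ i)
    have := hmem i hi
    simp only [mem_union, mem_Ico, mem_Icc] at this ⊢
    lia
  have hstep : f 1 - f 0 ≠ 0 := fun h => ha <| by
    simpa [hcast 0 (by lia), hcast 1 (by lia), hφ] using congrArg (Int.cast : ℤ → ZMod p) h
  have himage : φ '' ((↑) '' Iio q) = (↑) '' (f '' Iio q) := by
    rw [image_image, image_image]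
    exact image_congr fun i hi => (hcast i hi).symm
  rw [himage]
  exact (image_Iio_eq_Ico_or_of_eq_add_mul hq hstep hprog hmem).imp (congrArg _) (congrArg _)

/-- Let `q ≥ 3`, `p > 6q`, and in `ZMod p` let `N_q`, `N_q^+`, `N_q^−` be the sets of
residues with canonical representatives in `{0,…,q−1}`, `{q,…,2q−1}`, `{p−q,…,p−1}`
respectively. If the affine map `φ(x) = a·x + b` (with `a` a unit) satisfies
`φ(N_q) ⊆ N_q^− ∪ N_q^+`, then `φ(N_q) = N_q^−` or `φ(N_q) = N_q^+`. -/
theorem affine_image_interval (p q : ℕ) (hq : 3 ≤ q) (hp : 6 * q < p)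
    (φ : ZMod p → ZMod p) (a : (ZMod p)ˣ) (b : ZMod p)
    (hφ : ∀ x, φ x = (a : ZMod p) * x + b)
    (hsub : φ '' {x : ZMod p | x.val < q} ⊆
      {x : ZMod p | p - q ≤ x.val} ∪ {x : ZMod p | q ≤ x.val ∧ x.val < 2 * q}) :
    φ '' {x : ZMod p | x.val < q} = {x : ZMod p | p - q ≤ x.val} ∨
      φ '' {x : ZMod p | x.val < q} = {x : ZMod p | q ≤ x.val ∧ x.val < 2 * q} := by
  have : Fact (1 < p) := ⟨by lia⟩
  exact affine_image_interval_general hq (by lia) a.ne_zero hφ hsub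
end

section
/- Let p be a positive integer and define f : ZMod p → ℤ by f(x) = (2·v(x) − p)², where v(x) ∈ {0,…,p−1} is the canonical representative of x. Suppose φ : ZMod p → ZMod p is given by φ(x) = a·x + b, where a is a unit of ZMod p and b ∈ ZMod p, and suppose f(φ(x)) = f(x) for all x. Then either φ(x) = x for all x, or φ(x) = −x for all x. -/
/-! With `|x|` the absolute value of the least absolute residue of `x`, the integer `2 * val x - p`
has absolute value `p - 2 * |x|`, so its square determines `|x|`, that is, `x` up to sign. Comparing
squares at `0` gives `φ 0 = 0`, comparing them at `1` gives `φ 1 = ±1`, and an affine map is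
determined by these two values. -/

section ResidueUpToSign

variable {p : ℕ} [NeZero p]

lemma abs_two_mul_val_sub_eq (x : ZMod p) :
    |2 * (x.val : ℤ) - p| = p - 2 * |x.valMinAbs| := by
  have h_lt := x.val_lt
  rw [Int.abs_eq_natAbs, Int.abs_eq_natAbs, x.valMinAbs_natAbs_eq_min]
  omega

lemma sq_two_mul_val_sub_eq_iff {x y : ZMod p} :
    (2 * (x.val : ℤ) - p) ^ 2 = (2 * (y.val : ℤ) - p) ^ 2 ↔ x = y ∨ x = -y := by
  rw [sq_eq_sq_iff_abs_eq_abs, abs_two_mul_val_sub_eq, abs_two_mul_val_sub_eq, sub_right_inj,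
    mul_right_inj' two_ne_zero, ZMod.abs_valMinAbs_eq_abs_valMinAbs]

end ResidueUpToSign

lemma affine_eq_id_or_neg {R : Type*} [NonAssocRing R] {φ : R → R} {a b : R}
    (hφ : ∀ x, φ x = a * x + b) (h_zero : φ 0 = 0) (h_one : φ 1 = 1 ∨ φ 1 = -1) :
    (∀ x, φ x = x) ∨ (∀ x, φ x = -x) := by
  have hb : b = 0 := by simpa only [hφ, mul_zero, zero_add] using h_zero
  have ha : a = 1 ∨ a = -1 := by simpa only [hφ, hb, mul_one, add_zero] using h_one
  exact ha.imp (fun h x => by rw [hφ, hb, h, one_mul, add_zero])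
    (fun h x => by rw [hφ, hb, h, neg_one_mul, add_zero])

theorem affine_preserving_correction_terms_general {p : ℕ} [NeZero p]
    {f : ZMod p → ℤ} (hf : ∀ x, f x = (2 * (x.val : ℤ) - (p : ℤ)) ^ 2)
    {φ : ZMod p → ZMod p} {a b : ZMod p} (hφ : ∀ x, φ x = a * x + b)
    (hpres_zero : f (φ 0) = f 0) (hpres_one : f (φ 1) = f 1) :
    (∀ x, φ x = x) ∨ (∀ x, φ x = -x) := by
  have eq_or_eq_neg {x y : ZMod p} (h : f x = f y) : x = y ∨ x = -y :=
    sq_two_mul_val_sub_eq_iff.mp (by rwa [hf, hf] at h)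
  have h_zero : φ 0 = 0 := by simpa only [neg_zero, or_self] using eq_or_eq_neg hpres_zero
  exact affine_eq_id_or_neg hφ h_zero (eq_or_eq_neg hpres_one)

/-- Let `p > 0` and `f : ZMod p → ℤ`, `f(x) = (2·val(x) − p)²`. If the affine map
`φ(x) = a·x + b` (with `a` a unit) satisfies `f(φ(x)) = f(x)` for all `x`, then `φ` is
the identity or `φ(x) = −x`. -/
theorem affine_preserving_correction_terms (p : ℕ) (hp : 0 < p)
    (f : ZMod p → ℤ) (hf : ∀ x, f x = (2 * (x.val : ℤ) - (p : ℤ)) ^ 2)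
    (φ : ZMod p → ZMod p) (a : (ZMod p)ˣ) (b : ZMod p)
    (hφ : ∀ x, φ x = (a : ZMod p) * x + b)
    (hpres : ∀ x, f (φ x) = f x) :
    (∀ x, φ x = x) ∨ (∀ x, φ x = -x) := by
  have : NeZero p := ⟨hp.ne'⟩
  exact affine_preserving_correction_terms_general hf hφ (hpres 0) (hpres 1)
end

section
/- Let p ≥ 3 be an odd integer and define h : {0,1,…,p−1} → ℚ by h(i) = (2i − p − 1)²/(8p) + (−1/4 if i is even, +1/4 if i is odd). Then h(0) = h(1), h(i) ≤ h(0) for all i ∈ {0,…,p−1}, and h(i) = h(0) implies i = 0 or i = 1. -/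
/-!
Write `h i` for the function of the theorem. A difference of squares gives
`h 0 - h i = i (p + 1 - i) / (2 p)` for even `i`. For odd `i` the change of parity contributes a
further `-1 / 2`, and the result factors again, as `(i - 1) (p - i) / (2 p)`. Both expressions are
positive for `1 < i < p`, and the second vanishes at `i = 1`.
-/

variable {K : Type*} [Field K]

/-- The correction term `d(L(p,2), i)` of the lens space `L(p,2)` for odd `p`, shifted by `1/4`: the
paper's `h(i)`. The formula is taken for `p` in any field. -/
def shiftedLensCorrection (p : K) (i : ℕ) : K :=
  (2 * (i : K) - p - 1) ^ 2 / (8 * p) + (if Even i then -(1 / 4) else 1 / 4)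

namespace shiftedLensCorrection

section CharZero

variable [CharZero K] {p : K} {i : ℕ}

theorem apply_zero_sub_of_even (hi : Even i) :
    shiftedLensCorrection p 0 - shiftedLensCorrection p i = i * (p + 1 - i) / (2 * p) := by
  simp only [shiftedLensCorrection, if_pos hi, if_pos Even.zero, Nat.cast_zero]
  ring

theorem apply_zero_sub_of_odd (hp : p ≠ 0) (hi : Odd i) :
    shiftedLensCorrection p 0 - shiftedLensCorrection p i = (i - 1) * (p - i) / (2 * p) := by
  simp only [shiftedLensCorrection, if_neg (Nat.not_even_iff_odd.mpr hi), if_pos Even.zero,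
    Nat.cast_zero]
  field_simp
  ring

theorem apply_zero_eq_apply_one (hp : p ≠ 0) :
    shiftedLensCorrection p 0 = shiftedLensCorrection p 1 :=
  sub_eq_zero.mp <| by simp [apply_zero_sub_of_odd hp odd_one]

end CharZero

variable [LinearOrder K] [IsStrictOrderedRing K] {p : K} {i : ℕ}

theorem apply_lt_apply_zero (hi : 1 < i) (hip : (i : K) < p) :
    shiftedLensCorrection p i < shiftedLensCorrection p 0 := by
  have one_lt_i : (1 : K) < i := Nat.one_lt_cast.mpr hi
  have p_pos : 0 < p := by linarith
  rw [← sub_pos]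
  rcases i.even_or_odd with heven | hodd
  · rw [apply_zero_sub_of_even heven]
    exact div_pos (mul_pos (by linarith) (by linarith)) (by linarith)
  · rw [apply_zero_sub_of_odd p_pos.ne' hodd]
    exact div_pos (mul_pos (by linarith) (by linarith)) (by linarith)

theorem apply_le_apply_zero (hip : (i : K) < p) :
    shiftedLensCorrection p i ≤ shiftedLensCorrection p 0 := by
  have p_pos : 0 < p := i.cast_nonneg.trans_lt hip
  obtain rfl | rfl | hi : i = 0 ∨ i = 1 ∨ 1 < i := by omega
  · exact le_rfl
  · exact (apply_zero_eq_apply_one p_pos.ne').ge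
  · exact (apply_lt_apply_zero hi hip).le

theorem eq_zero_or_one_of_apply_eq_apply_zero (hip : (i : K) < p)
    (heq : shiftedLensCorrection p i = shiftedLensCorrection p 0) : i = 0 ∨ i = 1 := by
  by_contra hne
  exact (apply_lt_apply_zero (by omega) hip).ne heq

end shiftedLensCorrection

theorem lens_space_correction_max_general [LinearOrder K] [IsStrictOrderedRing K] {p : K}
    (hp : 0 < p) :
    shiftedLensCorrection p 0 = shiftedLensCorrection p 1 ∧
      (∀ i : ℕ, (i : K) < p → shiftedLensCorrection p i ≤ shiftedLensCorrection p 0) ∧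
      (∀ i : ℕ, (i : K) < p → shiftedLensCorrection p i = shiftedLensCorrection p 0 →
        i = 0 ∨ i = 1) :=
  ⟨shiftedLensCorrection.apply_zero_eq_apply_one hp.ne',
    fun _ hip => shiftedLensCorrection.apply_le_apply_zero hip,
    fun _ hip heq => shiftedLensCorrection.eq_zero_or_one_of_apply_eq_apply_zero hip heq⟩

/-- Let `p ≥ 3` be odd and `h(i) = (2i − p − 1)²/(8p) + (−1/4 if i even, +1/4 if i odd)`.
Then `h 0 = h 1`, `h i ≤ h 0` for all `i < p`, and `h i = h 0` implies `i = 0` or `i = 1`. -/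
theorem lens_space_correction_max (p : ℕ) (hp : 3 ≤ p) (hodd : Odd p)
    (h : ℕ → ℚ)
    (hh : ∀ i, h i = (2 * (i : ℚ) - (p : ℚ) - 1) ^ 2 / (8 * (p : ℚ)) +
      (if Even i then -(1 / 4) else 1 / 4)) :
    h 0 = h 1 ∧ (∀ i < p, h i ≤ h 0) ∧ (∀ i < p, h i = h 0 → i = 0 ∨ i = 1) := by
  obtain rfl : h = shiftedLensCorrection (p : ℚ) := funext hh
  exact_mod_cast lens_space_correction_max_general (p := (p : ℚ)) (Nat.cast_pos.mpr (by omega))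
end

section
/- Let p > q ≥ 1 be integers. Let v : ℕ → ℕ be nonincreasing with v(0) ≤ 1 and v(k) = 0 for all k ≥ 2, and let w : ℕ → ℕ satisfy w(0) = w(1) = 1 and w(k) = 0 for all k ≥ 2. For a function u : ℕ → ℕ and 0 ≤ i ≤ p−1, set δ_i(u) = max( u(⌊i/q⌋), u(⌊(p+q−1−i)/q⌋) ). If ∑_{i=0}^{p−1} δ_i(v) = ∑_{i=0}^{p−1} δ_i(w), then v(0) = 1 and v(1) = 1. -/
/-!
For nonincreasing `v`, `δ_{kq}(v) = v k` as long as `(2k - 1) q < p`. If `v ≤ w` pointwise, then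
`δ_i(v) ≤ δ_i(w)` termwise, so `∑ δ_i(w) ≤ ∑ δ_i(v)` makes all these inequalities equalities and
hence `w k ≤ v k` for those `k`. If `v` takes values in `{0, 1}` and `v k = 0`, then `v` vanishes
from `k` on, so `v ≤ w` holds as soon as `w` is positive on `[0, k]`, and the comparison at `k` is a
contradiction.
-/

/-- The quantity `δ_i` in the correction-term formula `d(S³_{p/q}(K), i) = d(L(p,q), i) - 2 δ_i`,
with `u` in place of the sequence `V_k(K)`. It is only meaningful for `0 < q` and `i < p`, where the
subtraction does not truncate. -/
def surgeryDelta {α : Type*} [LinearOrder α] (p q : ℕ) (u : ℕ → α) (i : ℕ) : α :=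
  max (u (i / q)) (u ((p + q - 1 - i) / q))

section Comparison

variable {α : Type*} [LinearOrder α] {p q k : ℕ} {v w : ℕ → α}

theorem surgeryDelta_mono (p q : ℕ) : Monotone (surgeryDelta p q : (ℕ → α) → ℕ → α) :=
  fun _ _ h _ => max_le_max (h _) (h _)

theorem surgeryDelta_mul_of_antitone (hq : 0 < q) (hv : Antitone v) (hk : (2 * k - 1) * q < p) :
    surgeryDelta p q v (k * q) = v k := by
  have hreflect : k ≤ (p + q - 1 - k * q) / q := by
    have : (k + k) * q ≤ (2 * k - 1 + 1) * q := Nat.mul_le_mul_right q (by lia)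
    rw [Nat.le_div_iff_mul_le hq]
    lia
  rw [surgeryDelta, Nat.mul_div_cancel k hq, max_eq_left (hv hreflect)]

theorem le_of_sum_surgeryDelta_le [AddCommMonoid α] [IsOrderedCancelAddMonoid α]
    (hq : 0 < q) (hv : Antitone v) (hvw : v ≤ w) (hk : (2 * k - 1) * q < p)
    (hsum : ∑ i ∈ Finset.range p, surgeryDelta p q w i ≤
      ∑ i ∈ Finset.range p, surgeryDelta p q v i) :
    w k ≤ v k := by
  have hle : ∀ i ∈ Finset.range p, surgeryDelta p q v i ≤ surgeryDelta p q w i :=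
    fun i _ => surgeryDelta_mono p q hvw i
  have hkp : k * q ∈ Finset.range p :=
    Finset.mem_range.mpr ((Nat.mul_le_mul_right q (by lia)).trans_lt hk)
  calc
    w k = w (k * q / q) := by rw [Nat.mul_div_cancel k hq]
    _ ≤ surgeryDelta p q w (k * q) := le_max_left _ _
    _ = surgeryDelta p q v (k * q) :=
      ((Finset.sum_eq_sum_iff_of_le hle).mp ((Finset.sum_le_sum hle).antisymm hsum) _ hkp).symm
    _ = v k := surgeryDelta_mul_of_antitone hq hv hk

end Comparison

-- For `k = 0` the truncated subtraction turns `hk` into `0 < p`.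
theorem correction_sum_forces_V_general {p q k : ℕ} (hq : 0 < q) (hk : (2 * k - 1) * q < p)
    {v w : ℕ → ℕ} (hv : Antitone v) (hv0 : v 0 ≤ 1) (hw : ∀ j ≤ k, 1 ≤ w j)
    (hsum : ∑ i ∈ Finset.range p, surgeryDelta p q w i ≤
      ∑ i ∈ Finset.range p, surgeryDelta p q v i) :
    ∀ j ≤ k, v j = 1 := by
  have hv_le (j : ℕ) : v j ≤ 1 := (hv j.zero_le).trans hv0
  have hvk : v k ≠ 0 := by
    intro hvk
    have hvw : v ≤ w := fun j => by
      rcases le_total j k with hj | hj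
      · exact (hv_le j).trans (hw j hj)
      · exact (hv hj).trans (hvk.le.trans (w j).zero_le)
    have hwk : w k ≤ v k := le_of_sum_surgeryDelta_le hq hv hvw hk hsum
    have hwk_pos : 1 ≤ w k := hw k le_rfl
    lia
  exact fun j hj => (hv_le j).antisymm ((Nat.one_le_iff_ne_zero.mpr hvk).trans (hv hj))

/-- Let `p > q ≥ 1`. Let `v : ℕ → ℕ` be nonincreasing with `v 0 ≤ 1` and `v k = 0` for
`k ≥ 2`, and let `w : ℕ → ℕ` satisfy `w 0 = w 1 = 1` and `w k = 0` for `k ≥ 2`. If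
`∑_{i=0}^{p−1} max(v(⌊i/q⌋), v(⌊(p+q−1−i)/q⌋)) = ∑_{i=0}^{p−1} max(w(⌊i/q⌋), w(⌊(p+q−1−i)/q⌋))`,
then `v 0 = 1` and `v 1 = 1`. -/
theorem correction_sum_forces_V (p q : ℕ) (hq : 1 ≤ q) (hpq : q < p)
    (v w : ℕ → ℕ) (hv_anti : Antitone v) (hv0 : v 0 ≤ 1) (hv2 : ∀ k, 2 ≤ k → v k = 0)
    (hw0 : w 0 = 1) (hw1 : w 1 = 1) (hw2 : ∀ k, 2 ≤ k → w k = 0)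
    (hsum : ∑ i ∈ Finset.range p, max (v (i / q)) (v ((p + q - 1 - i) / q)) =
            ∑ i ∈ Finset.range p, max (w (i / q)) (w ((p + q - 1 - i) / q))) :
    v 0 = 1 ∧ v 1 = 1 := by
  have hv := correction_sum_forces_V_general (k := 1) hq (by lia) hv_anti hv0
    (fun j _ => by interval_cases j <;> lia) hsum.ge
  exact ⟨hv 0 zero_le_one, hv 1 le_rfl⟩
end
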